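/- Let n ≥ 1, q > n, and let σ > 0 be a non-integer with integer part m = ⌊σ⌋ and fractional part s = σ − m ∈ (0,1). Let F : ℝⁿ → ℝ be defined by F = (−Δ)^m ⟨·⟩^{−q}, i.e. the m-fold iterated negative Laplacian of x ↦ (1 + ‖x‖²)^{−q/2}. Then there exists a constant C > 0 such that for every x ∈ ℝⁿ: |∫_{ℝⁿ} (2F(x) − F(x+y) − F(x−y)) ‖y‖^{−n−2s} dy| ≤ C (1 + ‖x‖²)^{−(n+2s)/2}, the integral being absolutely convergent. -/

import Mathlib

open MeasureTheory
open scoped BigOperators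

/-- The negative Laplacian `(-Δ)f(x) = -∑_{j=1}^n ∂²f/∂x_j²(x)` as an operator on
functions on `ℝⁿ`. -/
noncomputable def negLap {n : ℕ} :
    (EuclideanSpace ℝ (Fin n) → ℝ) → (EuclideanSpace ℝ (Fin n) → ℝ) :=
  fun f x =>
    -∑ j : Fin n,
      fderiv ℝ (fderiv ℝ f) x (EuclideanSpace.single j 1) (EuclideanSpace.single j 1)

/-! By an explicit computation, the Laplacian sends `⟨·⟩^r` to a combination of `⟨·⟩^(r - 2)` and
`⟨·⟩^(r - 4)`, so `F = (-Δ)^m ⟨·⟩^(-q)` is a combination of powers of the bracket with exponents at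
most `-q - 2m`. As `-q - 2m < -d`, where `d` is the dimension, `F` is integrable and `O(⟨x⟩^(-d))`,
and its second derivative is `O(⟨x⟩^(-d - 2))`.

These properties alone give the bound. Cut the singular integral at `‖y‖ = R = ⟨x⟩ / 2`. For
`‖y‖ ≤ R` the bracket is at least `R` on the ball `closedBall x R`, so the second difference is
`O(R^(-d - 2) ‖y‖²)` and the integral over this region is `O(R^(-d - 2) R^(2 - 2s))`. For `‖y‖ > R`
the term `2 F(x)` contributes `O(R^(-d) R^(-2s))`, while the kernel is at most `R^(-d - 2s)` and
meets the translates of `F` only through the `L¹` norm of `F`. -/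

open Asymptotics Laplacian Metric Module Set
open scoped RealInnerProductSpace

section SecondDifference

variable {E G : Type*} [NormedAddCommGroup E] [NormedAddCommGroup G] [NormedSpace ℝ G]

/-- The symmetric second difference `2 f(x) - f(x + y) - f(x - y)`, with the sign for which it is
minus the second derivative to leading order. -/
def secondDifference (f : E → G) (x y : E) : G :=
  (2 : ℝ) • f x - f (x + y) - f (x - y)

lemma norm_secondDifference_le (f : E → G) (x y : E) :
    ‖secondDifference f x y‖ ≤ 2 * ‖f x‖ + (‖f (x + y)‖ + ‖f (x - y)‖) := by
  have h := norm_sub_le_of_le (norm_sub_le ((2 : ℝ) • f x) (f (x + y))) (le_refl ‖f (x - y)‖)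
  rw [norm_smul, Real.norm_two] at h
  rw [← add_assoc]
  exact h

lemma aestronglyMeasurable_secondDifference [MeasurableSpace E] [MeasurableAdd E]
    [MeasurableNeg E] {μ : Measure E} [μ.IsAddLeftInvariant] [μ.IsNegInvariant] {f : E → G}
    (hf : AEStronglyMeasurable f μ) (x : E) :
    AEStronglyMeasurable (secondDifference f x) μ :=
  (aestronglyMeasurable_const.sub (hf.comp_measurePreserving (measurePreserving_add_left μ x))).sub
    (hf.comp_measurePreserving (μ.measurePreserving_sub_left x))

variable [NormedSpace ℝ E]

lemma norm_secondDifference_le_of_norm_iteratedFDeriv_two_le {f : E → G} (hf : ContDiff ℝ 2 f)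
    {x y : E} {M : ℝ} (hM : ∀ z ∈ closedBall x ‖y‖, ‖iteratedFDeriv ℝ 2 f z‖ ≤ M) :
    ‖secondDifference f x y‖ ≤ 2 * M * ‖y‖ ^ 2 := by
  have hM₀ : 0 ≤ M := (norm_nonneg _).trans (hM x (by simp))
  have hf' : ContDiff ℝ 1 (fderiv ℝ f) := hf.fderiv_right (by norm_num)
  have hderiv (v : E) : HasFDerivAt (fun v ↦ f (x + v) + f (x - v))
      (fderiv ℝ f (x + v) - fderiv ℝ f (x - v)) v := by
    have hdiff (z : E) : HasFDerivAt f (fderiv ℝ f z) z :=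
      (hf.differentiable (by norm_num) z).hasFDerivAt
    have hplus := (hdiff (x + v)).comp v ((hasFDerivAt_id v).const_add x)
    have hminus := (hdiff (x - v)).comp v ((hasFDerivAt_id v).const_sub x)
    refine (hplus.add hminus).congr_fderiv ?_
    ext w
    simp [sub_eq_add_neg]
  have hgrad (v : E) (hv : v ∈ closedBall (0 : E) ‖y‖) :
      ‖fderiv ℝ f (x + v) - fderiv ℝ f (x - v)‖ ≤ 2 * M * ‖y‖ := by
    rw [mem_closedBall_zero_iff] at hv
    calc ‖fderiv ℝ f (x + v) - fderiv ℝ f (x - v)‖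
        ≤ M * ‖x + v - (x - v)‖ := by
          refine (convex_closedBall x ‖y‖).norm_image_sub_le_of_norm_fderiv_le (𝕜 := ℝ)
            (fun z _ ↦ hf'.differentiable one_ne_zero z) (fun z hz ↦ ?_)
            (by simpa [dist_eq_norm] using hv) (by simpa [dist_eq_norm] using hv)
          rw [← norm_iteratedFDeriv_one, norm_iteratedFDeriv_fderiv]
          exact hM z hz
      _ = M * (2 * ‖v‖) := by
          rw [show x + v - (x - v) = (2 : ℝ) • v by rw [two_smul]; abel, norm_smul, Real.norm_two]
      _ ≤ 2 * M * ‖y‖ := by nlinarith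
  have hmvt := (convex_closedBall (0 : E) ‖y‖).norm_image_sub_le_of_norm_hasFDerivWithin_le
    (fun v _ ↦ (hderiv v).hasFDerivWithinAt) hgrad (x := 0) (y := y) (by simp) (by simp)
  rw [← norm_neg] at hmvt
  convert hmvt using 1
  · simp only [secondDifference, two_smul, add_zero, sub_zero]
    congr 1
    abel
  · rw [sub_zero]
    ring

end SecondDifference

section NormPower

lemma closedBall_zero_eq_norm_preimage_Iic {E : Type*} [SeminormedAddGroup E] (R : ℝ) :
    closedBall (0 : E) R = norm ⁻¹' Iic R := by
  ext
  simp

lemma compl_closedBall_zero_eq_norm_preimage_Ioi {E : Type*} [SeminormedAddGroup E] (R : ℝ) :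
    (closedBall (0 : E) R)ᶜ = norm ⁻¹' Ioi R := by
  ext
  simp

lemma eqOn_pow_smul_indicator_rpow {d : ℕ} (hd : 1 ≤ d) (S : Set ℝ) (a : ℝ) :
    EqOn (fun r : ℝ ↦ r ^ (d - 1) • S.indicator (· ^ a) r)
      (S.indicator (· ^ (a + d - 1))) (Ioi 0) := by
  intro r (hr : 0 < r)
  by_cases hrS : r ∈ S
  · simp only [indicator_of_mem hrS, smul_eq_mul]
    rw [← Real.rpow_natCast, ← Real.rpow_add hr, Nat.cast_sub hd, Nat.cast_one]
    ring_nf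
  · simp [hrS]

variable {E : Type*} [NormedAddCommGroup E] [NormedSpace ℝ E] [FiniteDimensional ℝ E]
  [Nontrivial E] [MeasurableSpace E] [BorelSpace E] (μ : Measure E) [μ.IsAddHaarMeasure]

lemma integrableOn_norm_preimage_norm_rpow_iff {S : Set ℝ} (hS : MeasurableSet S) (a : ℝ) :
    IntegrableOn (fun y : E ↦ ‖y‖ ^ a) (norm ⁻¹' S) μ ↔
      IntegrableOn (fun r : ℝ ↦ r ^ (a + finrank ℝ E - 1)) (Ioi 0 ∩ S) := by
  rw [← integrable_indicator_iff (measurable_norm hS),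
    show (norm ⁻¹' S).indicator (fun y : E ↦ ‖y‖ ^ a) = fun y ↦ S.indicator (· ^ a) ‖y‖ from rfl,
    integrable_fun_norm_addHaar,
    integrableOn_congr_fun (eqOn_pow_smul_indicator_rpow finrank_pos S a) measurableSet_Ioi,
    integrableOn_indicator_iff hS, inter_comm]

lemma setIntegral_norm_preimage_norm_rpow {S : Set ℝ} (hS : MeasurableSet S) (a : ℝ) :
    ∫ y in norm ⁻¹' S, ‖(y : E)‖ ^ a ∂μ =
      μ.toSphere.real univ * ∫ r in Ioi 0 ∩ S, r ^ (a + finrank ℝ E - 1) := by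
  rw [← integral_indicator (measurable_norm hS),
    show (norm ⁻¹' S).indicator (fun y : E ↦ ‖y‖ ^ a) = fun y ↦ S.indicator (· ^ a) ‖y‖ from rfl,
    integral_fun_norm_addHaar,
    setIntegral_congr_fun measurableSet_Ioi (eqOn_pow_smul_indicator_rpow finrank_pos S a),
    setIntegral_indicator hS, μ.toSphere_real_apply_univ]
  simp only [nsmul_eq_mul, smul_eq_mul, mul_assoc]

lemma integrableOn_closedBall_norm_rpow {a R : ℝ} (ha : 0 < a + finrank ℝ E) :
    IntegrableOn (fun y : E ↦ ‖y‖ ^ a) (closedBall 0 R) μ := by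
  rw [closedBall_zero_eq_norm_preimage_Iic,
    integrableOn_norm_preimage_norm_rpow_iff μ measurableSet_Iic, Ioi_inter_Iic]
  exact (intervalIntegral.intervalIntegrable_rpow' (by linarith)).1

lemma setIntegral_closedBall_norm_rpow {a R : ℝ} (ha : 0 < a + finrank ℝ E) (hR : 0 ≤ R) :
    ∫ y in closedBall (0 : E) R, ‖y‖ ^ a ∂μ =
      μ.toSphere.real univ * (R ^ (a + finrank ℝ E) / (a + finrank ℝ E)) := by
  rw [closedBall_zero_eq_norm_preimage_Iic,
    setIntegral_norm_preimage_norm_rpow μ measurableSet_Iic, Ioi_inter_Iic,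
    ← intervalIntegral.integral_of_le hR, integral_rpow (Or.inl (by linarith)), sub_add_cancel,
    Real.zero_rpow ha.ne', sub_zero]

lemma integrableOn_compl_closedBall_norm_rpow {a R : ℝ} (ha : a + finrank ℝ E < 0) (hR : 0 < R) :
    IntegrableOn (fun y : E ↦ ‖y‖ ^ a) (closedBall 0 R)ᶜ μ := by
  rw [compl_closedBall_zero_eq_norm_preimage_Ioi,
    integrableOn_norm_preimage_norm_rpow_iff μ measurableSet_Ioi,
    inter_eq_right.2 (Ioi_subset_Ioi hR.le)]
  exact integrableOn_Ioi_rpow_of_lt (by linarith) hR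

lemma setIntegral_compl_closedBall_norm_rpow {a R : ℝ} (ha : a + finrank ℝ E < 0) (hR : 0 < R) :
    ∫ y in (closedBall (0 : E) R)ᶜ, ‖y‖ ^ a ∂μ =
      μ.toSphere.real univ * (-R ^ (a + finrank ℝ E) / (a + finrank ℝ E)) := by
  rw [compl_closedBall_zero_eq_norm_preimage_Ioi,
    setIntegral_norm_preimage_norm_rpow μ measurableSet_Ioi,
    inter_eq_right.2 (Ioi_subset_Ioi hR.le), integral_Ioi_rpow_of_lt (by linarith) hR,
    sub_add_cancel]

end NormPower

section FracLaplacianIntegrand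

variable {E G : Type*} [NormedAddCommGroup E] [NormedSpace ℝ E] [NormedAddCommGroup G]
  [NormedSpace ℝ G]

/-- The integrand `y ↦ ‖y‖^(-d-2s) (2 f(x) - f(x + y) - f(x - y))`, `d = dim E`, of the singular
integral representing `(-Δ)^s f (x)`, up to the normalizing constant. At `y = 0` the kernel takes
its junk value, but the second difference vanishes there. -/
noncomputable def fracLaplacianIntegrand (s : ℝ) (f : E → G) (x y : E) : G :=
  ‖y‖ ^ (-(finrank ℝ E : ℝ) - 2 * s) • secondDifference f x y

lemma norm_fracLaplacianIntegrand (s : ℝ) (f : E → G) (x y : E) :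
    ‖fracLaplacianIntegrand s f x y‖ =
      ‖y‖ ^ (-(finrank ℝ E : ℝ) - 2 * s) * ‖secondDifference f x y‖ := by
  rw [fracLaplacianIntegrand, norm_smul, Real.norm_of_nonneg (by positivity)]

lemma norm_fracLaplacianIntegrand_le_of_mem_closedBall {f : E → G} (hf : ContDiff ℝ 2 f)
    {s R M : ℝ} {x y : E} (hM : ∀ z ∈ closedBall x R, ‖iteratedFDeriv ℝ 2 f z‖ ≤ M)
    (hy : y ∈ closedBall 0 R) :
    ‖fracLaplacianIntegrand s f x y‖ ≤ 2 * M * ‖y‖ ^ (2 - (finrank ℝ E : ℝ) - 2 * s) := by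
  rw [mem_closedBall_zero_iff] at hy
  have hM₀ : 0 ≤ M := (norm_nonneg _).trans
    (hM x (mem_closedBall_self ((norm_nonneg y).trans hy)))
  have hpow := Real.le_rpow_add (norm_nonneg y) 2 (-(finrank ℝ E : ℝ) - 2 * s)
  rw [Real.rpow_two] at hpow
  calc ‖fracLaplacianIntegrand s f x y‖
      = ‖y‖ ^ (-(finrank ℝ E : ℝ) - 2 * s) * ‖secondDifference f x y‖ :=
        norm_fracLaplacianIntegrand s f x y
    _ ≤ ‖y‖ ^ (-(finrank ℝ E : ℝ) - 2 * s) * (2 * M * ‖y‖ ^ 2) := by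
        gcongr
        exact norm_secondDifference_le_of_norm_iteratedFDeriv_two_le hf
          fun z hz ↦ hM z (closedBall_subset_closedBall hy hz)
    _ = 2 * M * (‖y‖ ^ 2 * ‖y‖ ^ (-(finrank ℝ E : ℝ) - 2 * s)) := by ring
    _ ≤ 2 * M * ‖y‖ ^ (2 - (finrank ℝ E : ℝ) - 2 * s) := by
        gcongr
        rwa [show (2 : ℝ) + (-(finrank ℝ E : ℝ) - 2 * s) = 2 - finrank ℝ E - 2 * s by ring] at hpow

lemma norm_fracLaplacianIntegrand_le_of_notMem_closedBall (f : E → G) {s R : ℝ} (hs : 0 ≤ s)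
    (hR : 0 < R) (x : E) {y : E} (hy : y ∉ closedBall 0 R) :
    ‖fracLaplacianIntegrand s f x y‖ ≤
      2 * ‖f x‖ * ‖y‖ ^ (-(finrank ℝ E : ℝ) - 2 * s) +
        R ^ (-(finrank ℝ E : ℝ) - 2 * s) * (‖f (x + y)‖ + ‖f (x - y)‖) := by
  rw [mem_closedBall_zero_iff, not_le] at hy
  have hker : ‖y‖ ^ (-(finrank ℝ E : ℝ) - 2 * s) ≤ R ^ (-(finrank ℝ E : ℝ) - 2 * s) :=
    Real.rpow_le_rpow_of_nonpos hR hy.le (by linarith [(finrank ℝ E).cast_nonneg (α := ℝ)])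
  calc ‖fracLaplacianIntegrand s f x y‖
      = ‖y‖ ^ (-(finrank ℝ E : ℝ) - 2 * s) * ‖secondDifference f x y‖ :=
        norm_fracLaplacianIntegrand s f x y
    _ ≤ ‖y‖ ^ (-(finrank ℝ E : ℝ) - 2 * s) * (2 * ‖f x‖ + (‖f (x + y)‖ + ‖f (x - y)‖)) := by
        gcongr
        exact norm_secondDifference_le f x y
    _ = 2 * ‖f x‖ * ‖y‖ ^ (-(finrank ℝ E : ℝ) - 2 * s) +
          ‖y‖ ^ (-(finrank ℝ E : ℝ) - 2 * s) * (‖f (x + y)‖ + ‖f (x - y)‖) := by ring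
    _ ≤ _ := by gcongr

variable [FiniteDimensional ℝ E] [MeasurableSpace E] [BorelSpace E] (μ : Measure E)
  [μ.IsAddHaarMeasure]

lemma aestronglyMeasurable_fracLaplacianIntegrand (s : ℝ) {f : E → G}
    (hf : AEStronglyMeasurable f μ) (x : E) :
    AEStronglyMeasurable (fracLaplacianIntegrand s f x) μ :=
  AEStronglyMeasurable.smul (Measurable.aestronglyMeasurable (by fun_prop))
    (aestronglyMeasurable_secondDifference hf x)

variable [Nontrivial E]

lemma integrableOn_and_norm_setIntegral_closedBall_fracLaplacianIntegrand_le {f : E → G}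
    (hf : ContDiff ℝ 2 f) {s R M : ℝ} (hs : s < 1) (hR : 0 ≤ R) {x : E}
    (hM : ∀ z ∈ closedBall x R, ‖iteratedFDeriv ℝ 2 f z‖ ≤ M) :
    IntegrableOn (fracLaplacianIntegrand s f x) (closedBall 0 R) μ ∧
      ‖∫ y in closedBall 0 R, fracLaplacianIntegrand s f x y ∂μ‖ ≤
        2 * M * (μ.toSphere.real univ * (R ^ (2 - 2 * s) / (2 - 2 * s))) := by
  have hexp : 2 - (finrank ℝ E : ℝ) - 2 * s + finrank ℝ E = 2 - 2 * s := by ring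
  have hpos : 0 < 2 - (finrank ℝ E : ℝ) - 2 * s + finrank ℝ E := by linarith
  have hdom := (integrableOn_closedBall_norm_rpow μ (R := R) hpos).const_mul (2 * M)
  have hle : ∀ᵐ y ∂μ.restrict (closedBall 0 R),
      ‖fracLaplacianIntegrand s f x y‖ ≤ 2 * M * ‖y‖ ^ (2 - (finrank ℝ E : ℝ) - 2 * s) :=
    ae_restrict_of_forall_mem measurableSet_closedBall fun y hy ↦
      norm_fracLaplacianIntegrand_le_of_mem_closedBall hf hM hy
  have hmeas := aestronglyMeasurable_fracLaplacianIntegrand μ s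
    hf.continuous.aestronglyMeasurable x
  refine ⟨hdom.mono' hmeas.restrict hle, ?_⟩
  refine (norm_integral_le_of_norm_le hdom hle).trans_eq ?_
  rw [integral_const_mul, setIntegral_closedBall_norm_rpow μ hpos hR, hexp]

lemma integrableOn_and_norm_setIntegral_compl_closedBall_fracLaplacianIntegrand_le {f : E → G}
    (hf : Integrable f μ) {s R : ℝ} (hs : 0 < s) (hR : 0 < R) (x : E) :
    IntegrableOn (fracLaplacianIntegrand s f x) (closedBall 0 R)ᶜ μ ∧
      ‖∫ y in (closedBall 0 R)ᶜ, fracLaplacianIntegrand s f x y ∂μ‖ ≤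
        2 * ‖f x‖ * (μ.toSphere.real univ * (R ^ (-2 * s) / (2 * s))) +
          R ^ (-(finrank ℝ E : ℝ) - 2 * s) * (2 * ∫ y, ‖f y‖ ∂μ) := by
  have hneg : -(finrank ℝ E : ℝ) - 2 * s + finrank ℝ E < 0 := by linarith
  have hplus : Integrable (fun y ↦ ‖f (x + y)‖) μ := (hf.comp_add_left x).norm
  have hminus : Integrable (fun y ↦ ‖f (x - y)‖) μ := (hf.comp_sub_left x).norm
  have htail := (integrableOn_compl_closedBall_norm_rpow μ hneg hR).const_mul (2 * ‖f x‖)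
  have hmass : Integrable (fun y ↦ R ^ (-(finrank ℝ E : ℝ) - 2 * s) *
      (‖f (x + y)‖ + ‖f (x - y)‖)) μ := (hplus.add hminus).const_mul _
  have hdom := htail.add hmass.integrableOn
  have hle : ∀ᵐ y ∂μ.restrict (closedBall 0 R)ᶜ, ‖fracLaplacianIntegrand s f x y‖ ≤
      2 * ‖f x‖ * ‖y‖ ^ (-(finrank ℝ E : ℝ) - 2 * s) +
        R ^ (-(finrank ℝ E : ℝ) - 2 * s) * (‖f (x + y)‖ + ‖f (x - y)‖) :=
    ae_restrict_of_forall_mem measurableSet_closedBall.compl fun y hy ↦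
      norm_fracLaplacianIntegrand_le_of_notMem_closedBall f hs.le hR x hy
  have hmeas := aestronglyMeasurable_fracLaplacianIntegrand μ s hf.aestronglyMeasurable x
  refine ⟨hdom.mono' hmeas.restrict hle, ?_⟩
  calc ‖∫ y in (closedBall 0 R)ᶜ, fracLaplacianIntegrand s f x y ∂μ‖
      ≤ _ := norm_integral_le_of_norm_le hdom hle
    _ = 2 * ‖f x‖ * (μ.toSphere.real univ * (R ^ (-2 * s) / (2 * s))) +
          ∫ y in (closedBall 0 R)ᶜ,
            R ^ (-(finrank ℝ E : ℝ) - 2 * s) * (‖f (x + y)‖ + ‖f (x - y)‖) ∂μ := by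
        rw [integral_add' htail hmass.integrableOn, integral_const_mul,
          setIntegral_compl_closedBall_norm_rpow μ hneg hR,
          show -(finrank ℝ E : ℝ) - 2 * s + finrank ℝ E = -2 * s by ring, neg_mul, neg_div_neg_eq]
    _ ≤ 2 * ‖f x‖ * (μ.toSphere.real univ * (R ^ (-2 * s) / (2 * s))) +
          ∫ y, R ^ (-(finrank ℝ E : ℝ) - 2 * s) * (‖f (x + y)‖ + ‖f (x - y)‖) ∂μ := by
        gcongr
        · exact .of_forall fun y ↦ by positivity
        · exact Measure.restrict_le_self
    _ = _ := by
        rw [integral_const_mul, integral_add hplus hminus,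
          integral_add_left_eq_self (fun y ↦ ‖f y‖) x,
          integral_sub_left_eq_self (fun y ↦ ‖f y‖) μ x, two_mul (∫ y, ‖f y‖ ∂μ)]

lemma integrable_and_norm_integral_fracLaplacianIntegrand_le {f : E → G} (hf : ContDiff ℝ 2 f)
    (hfi : Integrable f μ) {s : ℝ} (hs : s ∈ Ioo (0 : ℝ) 1) {R M : ℝ} (hR : 0 < R) {x : E}
    (hM : ∀ z ∈ closedBall x R, ‖iteratedFDeriv ℝ 2 f z‖ ≤ M) :
    Integrable (fracLaplacianIntegrand s f x) μ ∧
      ‖∫ y, fracLaplacianIntegrand s f x y ∂μ‖ ≤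
        2 * M * (μ.toSphere.real univ * (R ^ (2 - 2 * s) / (2 - 2 * s))) +
          (2 * ‖f x‖ * (μ.toSphere.real univ * (R ^ (-2 * s) / (2 * s))) +
            R ^ (-(finrank ℝ E : ℝ) - 2 * s) * (2 * ∫ y, ‖f y‖ ∂μ)) := by
  obtain ⟨hnear, hnear_le⟩ :=
    integrableOn_and_norm_setIntegral_closedBall_fracLaplacianIntegrand_le μ hf hs.2 hR.le hM
  obtain ⟨hfar, hfar_le⟩ :=
    integrableOn_and_norm_setIntegral_compl_closedBall_fracLaplacianIntegrand_le μ hfi hs.1 hR x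
  have hint : Integrable (fracLaplacianIntegrand s f x) μ := by
    rw [← integrableOn_univ, ← union_compl_self (closedBall (0 : E) R)]
    exact hnear.union hfar
  refine ⟨hint, ?_⟩
  rw [← integral_add_compl measurableSet_closedBall hint]
  exact norm_add_le_of_le hnear_le hfar_le

lemma norm_integral_fracLaplacianIntegrand_le_rpow {f : E → G} (hf : ContDiff ℝ 2 f)
    (hfi : Integrable f μ) {s : ℝ} (hs : s ∈ Ioo (0 : ℝ) 1) {R A B : ℝ} (hR : 0 < R) {x : E}
    (hA : ‖f x‖ ≤ A * R ^ (-(finrank ℝ E : ℝ)))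
    (hB : ∀ z ∈ closedBall x R, ‖iteratedFDeriv ℝ 2 f z‖ ≤ B * R ^ (-(finrank ℝ E : ℝ) - 2)) :
    ‖∫ y, fracLaplacianIntegrand s f x y ∂μ‖ ≤
      (2 * B * (μ.toSphere.real univ / (2 - 2 * s)) + 2 * A * (μ.toSphere.real univ / (2 * s)) +
        2 * ∫ y, ‖f y‖ ∂μ) * R ^ (-(finrank ℝ E : ℝ) - 2 * s) := by
  have hs₀ : 0 < s := hs.1
  have hnear : R ^ (-(finrank ℝ E : ℝ) - 2) * R ^ (2 - 2 * s) =
      R ^ (-(finrank ℝ E : ℝ) - 2 * s) := by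
    rw [← Real.rpow_add hR, sub_add_sub_cancel]
  have hfar : R ^ (-(finrank ℝ E : ℝ)) * R ^ (-2 * s) = R ^ (-(finrank ℝ E : ℝ) - 2 * s) := by
    rw [← Real.rpow_add hR, neg_mul, ← sub_eq_add_neg]
  refine (integrable_and_norm_integral_fracLaplacianIntegrand_le μ hf hfi hs hR hB).2.trans ?_
  calc 2 * (B * R ^ (-(finrank ℝ E : ℝ) - 2)) *
          (μ.toSphere.real univ * (R ^ (2 - 2 * s) / (2 - 2 * s))) +
        (2 * ‖f x‖ * (μ.toSphere.real univ * (R ^ (-2 * s) / (2 * s))) +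
          R ^ (-(finrank ℝ E : ℝ) - 2 * s) * (2 * ∫ y, ‖f y‖ ∂μ))
      ≤ 2 * (B * R ^ (-(finrank ℝ E : ℝ) - 2)) *
          (μ.toSphere.real univ * (R ^ (2 - 2 * s) / (2 - 2 * s))) +
        (2 * (A * R ^ (-(finrank ℝ E : ℝ))) *
          (μ.toSphere.real univ * (R ^ (-2 * s) / (2 * s))) +
            R ^ (-(finrank ℝ E : ℝ) - 2 * s) * (2 * ∫ y, ‖f y‖ ∂μ)) := by gcongr
    _ = 2 * B * (μ.toSphere.real univ / (2 - 2 * s)) *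
          (R ^ (-(finrank ℝ E : ℝ) - 2) * R ^ (2 - 2 * s)) +
        2 * A * (μ.toSphere.real univ / (2 * s)) *
          (R ^ (-(finrank ℝ E : ℝ)) * R ^ (-2 * s)) +
        2 * (∫ y, ‖f y‖ ∂μ) * R ^ (-(finrank ℝ E : ℝ) - 2 * s) := by ring
    _ = _ := by
        rw [hnear, hfar]
        ring

end FracLaplacianIntegrand

section JapaneseBracket

section Seminormed

variable {E : Type*} [SeminormedAddCommGroup E]

/-- The Japanese bracket `⟨x⟩ = √(1 + ‖x‖²)`, a smooth substitute for `1 + ‖x‖` that measures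
growth and decay at infinity. -/
noncomputable def japaneseBracket (x : E) : ℝ :=
  √(1 + ‖x‖ ^ 2)

lemma japaneseBracket_rpow (x : E) (r : ℝ) :
    japaneseBracket x ^ r = (1 + ‖x‖ ^ 2) ^ (r / 2) :=
  (Real.rpow_div_two_eq_sqrt r (by positivity)).symm

lemma japaneseBracket_sq (x : E) : japaneseBracket x ^ 2 = 1 + ‖x‖ ^ 2 :=
  Real.sq_sqrt (by positivity)

lemma japaneseBracket_rpow_add_two (x : E) (r : ℝ) :
    japaneseBracket x ^ (r + 2) = (1 + ‖x‖ ^ 2) * japaneseBracket x ^ r := by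
  rw [← japaneseBracket_sq, mul_comm]
  exact_mod_cast Real.rpow_add_natCast (Real.sqrt_ne_zero'.2 (by positivity)) r 2

lemma one_le_japaneseBracket (x : E) : 1 ≤ japaneseBracket x :=
  Real.one_le_sqrt.2 (by nlinarith [norm_nonneg x])

lemma japaneseBracket_pos (x : E) : 0 < japaneseBracket x :=
  one_pos.trans_le (one_le_japaneseBracket x)

lemma norm_le_japaneseBracket (x : E) : ‖x‖ ≤ japaneseBracket x :=
  Real.le_sqrt_of_sq_le (by linarith)

lemma japaneseBracket_le_add_norm_sub (x y : E) :
    japaneseBracket x ≤ japaneseBracket y + ‖x - y‖ := by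
  have hxy : ‖x‖ ≤ ‖y‖ + ‖x - y‖ := norm_le_norm_add_norm_sub' x y
  refine Real.sqrt_le_iff.2 ⟨by have := japaneseBracket_pos y; positivity, ?_⟩
  nlinarith [japaneseBracket_sq y, norm_le_japaneseBracket y, norm_nonneg x, norm_nonneg (x - y)]

lemma japaneseBracket_div_two_le_of_mem_closedBall {x z : E}
    (hz : z ∈ closedBall x (japaneseBracket x / 2)) :
    japaneseBracket x / 2 ≤ japaneseBracket z := by
  rw [mem_closedBall_comm, mem_closedBall_iff_norm] at hz
  linarith [japaneseBracket_le_add_norm_sub x z]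

lemma isBigO_japaneseBracket_rpow_of_le {r b : ℝ} (hrb : r ≤ b) :
    (fun x : E ↦ japaneseBracket x ^ r) =O[⊤] fun x ↦ japaneseBracket x ^ b :=
  .of_norm_le fun x ↦ by
    rw [Real.norm_of_nonneg (Real.rpow_nonneg (japaneseBracket_pos x).le r)]
    exact Real.rpow_le_rpow_of_exponent_le (one_le_japaneseBracket x) hrb

end Seminormed

variable {E G : Type*} [NormedAddCommGroup E] [NormedSpace ℝ E] [FiniteDimensional ℝ E]
  [Nontrivial E] [MeasurableSpace E] [BorelSpace E] (μ : Measure E) [μ.IsAddHaarMeasure]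
  [NormedAddCommGroup G] [NormedSpace ℝ G]

theorem integrable_and_isBigO_integral_fracLaplacianIntegrand {f : E → G} (hf : ContDiff ℝ 2 f)
    (hfi : Integrable f μ) (hf₀ : f =O[⊤] fun x ↦ japaneseBracket x ^ (-(finrank ℝ E : ℝ)))
    (hf₂ : iteratedFDeriv ℝ 2 f =O[⊤] fun x ↦ japaneseBracket x ^ (-(finrank ℝ E : ℝ) - 2))
    {s : ℝ} (hs : s ∈ Ioo (0 : ℝ) 1) :
    (∀ x, Integrable (fracLaplacianIntegrand s f x) μ) ∧
      (fun x ↦ ∫ y, fracLaplacianIntegrand s f x y ∂μ) =O[⊤]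
        fun x ↦ japaneseBracket x ^ (-(finrank ℝ E : ℝ) - 2 * s) := by
  obtain ⟨A, hA₀, hA⟩ := hf₀.exists_nonneg
  obtain ⟨B, hB₀, hB⟩ := hf₂.exists_nonneg
  simp only [isBigOWith_top, Real.norm_of_nonneg (Real.rpow_nonneg (japaneseBracket_pos _).le _)]
    at hA hB
  have hR (x : E) : 0 < japaneseBracket x / 2 := half_pos (japaneseBracket_pos x)
  have hfar (x : E) : ‖f x‖ ≤ A * (japaneseBracket x / 2) ^ (-(finrank ℝ E : ℝ)) :=
    (hA x).trans <| mul_le_mul_of_nonneg_left (Real.rpow_le_rpow_of_nonpos (hR x)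
      (half_le_self (japaneseBracket_pos x).le) (by simp)) hA₀
  have hnear (x z : E) (hz : z ∈ closedBall x (japaneseBracket x / 2)) :
      ‖iteratedFDeriv ℝ 2 f z‖ ≤ B * (japaneseBracket x / 2) ^ (-(finrank ℝ E : ℝ) - 2) :=
    (hB z).trans <| mul_le_mul_of_nonneg_left (Real.rpow_le_rpow_of_nonpos (hR x)
      (japaneseBracket_div_two_le_of_mem_closedBall hz)
      (by linarith [(finrank ℝ E).cast_nonneg (α := ℝ)])) hB₀
  refine ⟨fun x ↦
    (integrable_and_norm_integral_fracLaplacianIntegrand_le μ hf hfi hs (hR x) (hnear x)).1, ?_⟩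
  have hhalf : (fun x ↦ ∫ y, fracLaplacianIntegrand s f x y ∂μ) =O[⊤]
      fun x ↦ (japaneseBracket x / 2) ^ (-(finrank ℝ E : ℝ) - 2 * s) :=
    isBigO_top.2 ⟨_, fun x ↦ by
      rw [Real.norm_of_nonneg (Real.rpow_nonneg (hR x).le _)]
      exact norm_integral_fracLaplacianIntegrand_le_rpow μ hf hfi hs (hR x) (hfar x) (hnear x)⟩
  simp only [div_eq_inv_mul, Real.mul_rpow (inv_nonneg.2 zero_le_two) (japaneseBracket_pos _).le]
    at hhalf
  exact hhalf.trans (isBigO_const_mul_self _ _ _)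

end JapaneseBracket

section Derivatives

variable {E : Type*} [NormedAddCommGroup E] [InnerProductSpace ℝ E]

lemma hasFDerivAt_japaneseBracket_rpow (r : ℝ) (x : E) :
    HasFDerivAt (fun y : E ↦ japaneseBracket y ^ r)
      ((r * japaneseBracket x ^ (r - 2)) • innerSL ℝ x) x := by
  simp only [japaneseBracket_rpow]
  refine (((hasStrictFDerivAt_norm_sq x).hasFDerivAt.const_add 1).rpow_const
    (p := r / 2) (Or.inl (by positivity))).congr_fderiv ?_
  ext w
  simp only [smul_apply, coe_innerSL_apply, nsmul_eq_mul, Nat.cast_ofNat, smul_eq_mul, sub_div,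
    ne_eq, OfNat.ofNat_ne_zero, not_false_eq_true, div_self]
  ring

lemma contDiff_japaneseBracket_rpow (r : ℝ) {k : WithTop ℕ∞} :
    ContDiff ℝ k fun x : E ↦ japaneseBracket x ^ r := by
  simp only [japaneseBracket_rpow]
  exact (contDiff_const.add (contDiff_norm_sq ℝ)).rpow_const_of_ne fun x ↦ by positivity

lemma iteratedFDeriv_two_japaneseBracket_rpow_apply (r : ℝ) (x : E) (v : Fin 2 → E) :
    iteratedFDeriv ℝ 2 (fun y : E ↦ japaneseBracket y ^ r) x v =
      r * japaneseBracket x ^ (r - 2) * ⟪v 0, v 1⟫ +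
        r * (r - 2) * japaneseBracket x ^ (r - 4) * (⟪x, v 0⟫ * ⟪x, v 1⟫) := by
  have hgrad : fderiv ℝ (fun y : E ↦ japaneseBracket y ^ r) =
      fun y ↦ (r * japaneseBracket y ^ (r - 2)) • innerSL ℝ y :=
    funext fun y ↦ (hasFDerivAt_japaneseBracket_rpow r y).fderiv
  have hdiff : DifferentiableAt ℝ (fderiv ℝ fun y : E ↦ japaneseBracket y ^ r) x :=
    ((contDiff_japaneseBracket_rpow r (k := 2)).fderiv_right le_rfl).differentiable one_ne_zero x
  have hdir : HasFDerivAt (fun y : E ↦ r * japaneseBracket y ^ (r - 2) * ⟪y, v 1⟫) _ x :=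
    ((hasFDerivAt_japaneseBracket_rpow (r - 2) x).const_mul r).mul
      ((hasFDerivAt_id x).inner ℝ (hasFDerivAt_const (v 1) x))
  calc iteratedFDeriv ℝ 2 (fun y : E ↦ japaneseBracket y ^ r) x v
      = fderiv ℝ (fun y ↦ fderiv ℝ (fun y : E ↦ japaneseBracket y ^ r) y (v 1)) x (v 0) := by
        rw [iteratedFDeriv_two_apply, fderiv_clm_apply hdiff (differentiableAt_const _)]
        simp
    _ = fderiv ℝ (fun y ↦ r * japaneseBracket y ^ (r - 2) * ⟪y, v 1⟫) x (v 0) := by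
        simp only [hgrad, smul_apply, innerSL_apply_apply, smul_eq_mul]
    _ = _ := by
        rw [hdir.fderiv, show r - 2 - 2 = r - 4 by ring]
        simp only [id_eq, add_apply, smul_apply, ContinuousLinearMap.comp_apply,
          ContinuousLinearMap.prod_apply, ContinuousLinearMap.id_apply, zero_apply,
          fderivInnerCLM_apply, inner_zero_right, zero_add, smul_eq_mul, coe_innerSL_apply]
        ring

lemma norm_iteratedFDeriv_two_japaneseBracket_rpow_le (r : ℝ) (x : E) :
    ‖iteratedFDeriv ℝ 2 (fun y : E ↦ japaneseBracket y ^ r) x‖ ≤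
      (|r| + |r * (r - 2)|) * japaneseBracket x ^ (r - 2) := by
  have hpos := japaneseBracket_pos x
  have hgain : japaneseBracket x ^ (r - 4) * ‖x‖ ^ 2 ≤ japaneseBracket x ^ (r - 2) := by
    rw [show r - 2 = r - 4 + 2 by ring, japaneseBracket_rpow_add_two]
    nlinarith [Real.rpow_pos_of_pos hpos (r - 4)]
  refine ContinuousMultilinearMap.opNorm_le_bound (by positivity) fun v ↦ ?_
  rw [iteratedFDeriv_two_japaneseBracket_rpow_apply, Fin.prod_univ_two]
  calc ‖r * japaneseBracket x ^ (r - 2) * ⟪v 0, v 1⟫ +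
        r * (r - 2) * japaneseBracket x ^ (r - 4) * (⟪x, v 0⟫ * ⟪x, v 1⟫)‖
      ≤ |r| * japaneseBracket x ^ (r - 2) * ‖⟪v 0, v 1⟫‖ +
        |r * (r - 2)| * japaneseBracket x ^ (r - 4) * (‖⟪x, v 0⟫‖ * ‖⟪x, v 1⟫‖) := by
        refine (norm_add_le _ _).trans_eq ?_
        simp only [norm_mul, Real.norm_of_nonneg (Real.rpow_nonneg hpos.le _), abs_mul,
          Real.norm_eq_abs]
    _ ≤ |r| * japaneseBracket x ^ (r - 2) * (‖v 0‖ * ‖v 1‖) +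
        |r * (r - 2)| * japaneseBracket x ^ (r - 4) * ((‖x‖ * ‖v 0‖) * (‖x‖ * ‖v 1‖)) := by
        gcongr <;> exact norm_inner_le_norm _ _
    _ = |r| * japaneseBracket x ^ (r - 2) * (‖v 0‖ * ‖v 1‖) +
        |r * (r - 2)| * (japaneseBracket x ^ (r - 4) * ‖x‖ ^ 2) * (‖v 0‖ * ‖v 1‖) := by ring
    _ ≤ |r| * japaneseBracket x ^ (r - 2) * (‖v 0‖ * ‖v 1‖) +
        |r * (r - 2)| * japaneseBracket x ^ (r - 2) * (‖v 0‖ * ‖v 1‖) := by gcongr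
    _ = _ := by ring

variable [FiniteDimensional ℝ E]

lemma laplacian_japaneseBracket_rpow (r : ℝ) :
    Δ (fun y : E ↦ japaneseBracket y ^ r) = fun x ↦
      r * (finrank ℝ E + r - 2) * japaneseBracket x ^ (r - 2) -
        r * (r - 2) * japaneseBracket x ^ (r - 4) := by
  ext x
  have hsq : japaneseBracket x ^ (r - 2) = (1 + ‖x‖ ^ 2) * japaneseBracket x ^ (r - 4) := by
    rw [← japaneseBracket_rpow_add_two, show r - 4 + 2 = r - 2 by ring]
  have hparseval := (stdOrthonormalBasis ℝ E).sum_sq_inner_left x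
  simp only [InnerProductSpace.laplacian_eq_iteratedFDeriv_stdOrthonormalBasis,
    iteratedFDeriv_two_japaneseBracket_rpow_apply, Matrix.cons_val_zero, Matrix.cons_val_one,
    Finset.sum_add_distrib, ← Finset.mul_sum, ← sq, hparseval, real_inner_self_eq_norm_sq,
    OrthonormalBasis.norm_eq_one, one_pow, Finset.sum_const, Finset.card_univ, Fintype.card_fin,
    nsmul_eq_mul, mul_one]
  linear_combination -(r * (r - 2)) * hsq

end Derivatives

section JapaneseBracketPowSpan

variable (E : Type*) [NormedAddCommGroup E]

/-- The real linear span of the powers `⟨·⟩^r` of the Japanese bracket with exponent `r ≤ b`: a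
space of functions of order `b` that the Laplacian maps into the corresponding space of order
`b - 2`. -/
def japaneseBracketPowSpan (b : ℝ) : Submodule ℝ (E → ℝ) :=
  Submodule.span ℝ ((fun r x ↦ japaneseBracket x ^ r) '' Iic b)

variable {E} {b r : ℝ} {f : E → ℝ}

lemma japaneseBracket_rpow_mem_japaneseBracketPowSpan (hr : r ≤ b) :
    (fun x : E ↦ japaneseBracket x ^ r) ∈ japaneseBracketPowSpan E b :=
  Submodule.subset_span (mem_image_of_mem _ hr)

lemma isBigO_of_mem_japaneseBracketPowSpan (hf : f ∈ japaneseBracketPowSpan E b) :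
    f =O[⊤] fun x ↦ japaneseBracket x ^ b := by
  induction hf using Submodule.span_induction with
  | mem f hf =>
    obtain ⟨r, hr, rfl⟩ := hf
    exact isBigO_japaneseBracket_rpow_of_le hr
  | zero => exact isBigO_zero _ _
  | add f g _ _ hf hg => exact hf.add hg
  | smul c f _ hf => exact hf.const_smul_left c

variable [InnerProductSpace ℝ E]

lemma contDiff_of_mem_japaneseBracketPowSpan {k : WithTop ℕ∞}
    (hf : f ∈ japaneseBracketPowSpan E b) : ContDiff ℝ k f := by
  induction hf using Submodule.span_induction with
  | mem f hf =>
    obtain ⟨r, -, rfl⟩ := hf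
    exact contDiff_japaneseBracket_rpow r
  | zero => exact contDiff_zero_fun
  | add f g _ _ hf hg => exact hf.add hg
  | smul c f _ hf => exact hf.const_smul c

lemma isBigO_iteratedFDeriv_two_of_mem_japaneseBracketPowSpan
    (hf : f ∈ japaneseBracketPowSpan E b) :
    iteratedFDeriv ℝ 2 f =O[⊤] fun x ↦ japaneseBracket x ^ (b - 2) := by
  induction hf using Submodule.span_induction with
  | mem f hf =>
    obtain ⟨r, hr, rfl⟩ := hf
    refine IsBigO.trans (isBigO_top.2 ⟨|r| + |r * (r - 2)|, fun x ↦ ?_⟩)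
      (isBigO_japaneseBracket_rpow_of_le (sub_le_sub_right hr 2))
    rw [Real.norm_of_nonneg (Real.rpow_nonneg (japaneseBracket_pos x).le _)]
    exact norm_iteratedFDeriv_two_japaneseBracket_rpow_le r x
  | zero =>
    rw [iteratedFDeriv_zero]
    exact isBigO_zero _ _
  | add f g hf hg hf' hg' =>
    rw [iteratedFDeriv_add (contDiff_of_mem_japaneseBracketPowSpan hf)
      (contDiff_of_mem_japaneseBracketPowSpan hg)]
    exact hf'.add hg'
  | smul c f hf hf' =>
    have hsmul : iteratedFDeriv ℝ 2 (c • f) = c • iteratedFDeriv ℝ 2 f := funext fun x ↦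
      iteratedFDeriv_const_smul_apply (contDiff_of_mem_japaneseBracketPowSpan hf).contDiffAt
    rw [hsmul]
    exact hf'.const_smul_left c

variable [FiniteDimensional ℝ E]

lemma laplacian_mem_japaneseBracketPowSpan (hf : f ∈ japaneseBracketPowSpan E b) :
    Δ f ∈ japaneseBracketPowSpan E (b - 2) := by
  induction hf using Submodule.span_induction with
  | mem f hf =>
    obtain ⟨r, hr : r ≤ b, rfl⟩ := hf
    rw [laplacian_japaneseBracket_rpow]
    exact Submodule.sub_mem _
      (Submodule.smul_mem _ _ (japaneseBracket_rpow_mem_japaneseBracketPowSpan (by linarith)))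
      (Submodule.smul_mem _ _ (japaneseBracket_rpow_mem_japaneseBracketPowSpan (by linarith)))
  | zero =>
    have hzero : Δ (0 : E → ℝ) = 0 := InnerProductSpace.laplacian_const
    rw [hzero]
    exact Submodule.zero_mem _
  | add f g hf hg hf' hg' =>
    have hadd : Δ (f + g) = Δ f + Δ g := funext fun x ↦
      (contDiff_of_mem_japaneseBracketPowSpan hf).contDiffAt.laplacian_add
        (contDiff_of_mem_japaneseBracketPowSpan hg).contDiffAt
    rw [hadd]
    exact Submodule.add_mem _ hf' hg'
  | smul c f hf hf' =>
    have hsmul : Δ (c • f) = c • Δ f := funext fun x ↦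
      InnerProductSpace.laplacian_smul c
        (contDiff_of_mem_japaneseBracketPowSpan hf).contDiffAt
    rw [hsmul]
    exact Submodule.smul_mem _ c hf'

lemma iterate_neg_laplacian_mem_japaneseBracketPowSpan (hf : f ∈ japaneseBracketPowSpan E b)
    (m : ℕ) : (fun g ↦ -Δ g)^[m] f ∈ japaneseBracketPowSpan E (b - 2 * m) := by
  induction m with
  | zero => simpa using hf
  | succ m ih =>
    rw [Function.iterate_succ_apply', Nat.cast_succ, mul_add_one, ← sub_sub]
    exact Submodule.neg_mem _ (laplacian_mem_japaneseBracketPowSpan ih)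

variable [MeasurableSpace E] [BorelSpace E] (μ : Measure E) [μ.IsAddHaarMeasure]

lemma integrable_of_mem_japaneseBracketPowSpan (hb : b < -(finrank ℝ E : ℝ))
    (hf : f ∈ japaneseBracketPowSpan E b) : Integrable f μ := by
  have hbracket : Integrable (fun x : E ↦ japaneseBracket x ^ b) μ := by
    simpa [japaneseBracket_rpow] using
      integrable_rpow_neg_one_add_norm_sq (μ := μ) (lt_neg_of_lt_neg hb)
  have hcont : Continuous f := (contDiff_of_mem_japaneseBracketPowSpan (k := 0) hf).continuous
  exact (isBigO_of_mem_japaneseBracketPowSpan hf).integrable hcont.aestronglyMeasurable hbracket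

end JapaneseBracketPowSpan

section IteratedLaplacian

lemma negLap_eq_neg_laplacian (n : ℕ) : negLap (n := n) = fun f ↦ -Δ f := by
  ext f x
  simp [negLap, iteratedFDeriv_two_apply,
    InnerProductSpace.laplacian_eq_iteratedFDeriv_orthonormalBasis f
      (EuclideanSpace.basisFun (Fin n) ℝ)]

variable {E : Type*} [NormedAddCommGroup E] [InnerProductSpace ℝ E] [FiniteDimensional ℝ E]
  [Nontrivial E] [MeasurableSpace E] [BorelSpace E]

theorem fractional_laplacian_iterated_japanese_bracket_bound_general (μ : Measure E)
    [μ.IsAddHaarMeasure] {q s : ℝ} {m : ℕ} (hq : finrank ℝ E < q + 2 * m)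
    (hs : s ∈ Ioo (0 : ℝ) 1) {F : E → ℝ}
    (hF : F = (fun f : E → ℝ ↦ -Δ f)^[m] fun y : E ↦ (1 + ‖y‖ ^ 2) ^ (-q / 2)) :
    ∃ C > (0 : ℝ), ∀ x : E,
      Integrable (fun y : E ↦
        (2 * F x - F (x + y) - F (x - y)) * ‖y‖ ^ (-(finrank ℝ E : ℝ) - 2 * s)) μ ∧
      |∫ y : E, (2 * F x - F (x + y) - F (x - y)) * ‖y‖ ^ (-(finrank ℝ E : ℝ) - 2 * s) ∂μ|
        ≤ C * (1 + ‖x‖ ^ 2) ^ (-((finrank ℝ E : ℝ) + 2 * s) / 2) := by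
  have hmem : F ∈ japaneseBracketPowSpan E (-q - 2 * m) := by
    simpa only [hF, ← japaneseBracket_rpow] using
      iterate_neg_laplacian_mem_japaneseBracketPowSpan
        (japaneseBracket_rpow_mem_japaneseBracketPowSpan (E := E) (le_refl (-q))) m
  have horder : -q - 2 * m < -(finrank ℝ E : ℝ) := by linarith
  obtain ⟨hint, hdecay⟩ := integrable_and_isBigO_integral_fracLaplacianIntegrand μ
    (contDiff_of_mem_japaneseBracketPowSpan hmem)
    (integrable_of_mem_japaneseBracketPowSpan μ horder hmem)
    ((isBigO_of_mem_japaneseBracketPowSpan hmem).trans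
      (isBigO_japaneseBracket_rpow_of_le horder.le))
    ((isBigO_iteratedFDeriv_two_of_mem_japaneseBracketPowSpan hmem).trans
      (isBigO_japaneseBracket_rpow_of_le (by linarith))) hs
  have hintegrand (x y : E) :
      (2 * F x - F (x + y) - F (x - y)) * ‖y‖ ^ (-(finrank ℝ E : ℝ) - 2 * s) =
        fracLaplacianIntegrand s F x y := mul_comm _ _
  obtain ⟨C, hC₀, hC⟩ := hdecay.exists_pos
  refine ⟨C, hC₀, fun x ↦ ?_⟩
  simp only [hintegrand, neg_add', ← japaneseBracket_rpow]
  refine ⟨hint x, ?_⟩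
  simpa only [Real.norm_eq_abs, Real.abs_rpow_of_nonneg (japaneseBracket_pos _).le,
    abs_of_pos (japaneseBracket_pos _)] using isBigOWith_top.1 hC x

end IteratedLaplacian

/-- Pointwise bound `|(-Δ)^σ ⟨·⟩^{-q}(x)| ≲ ⟨x⟩^{-n-2s}` for non-integer `σ > 0` with
integer part `m = ⌊σ⌋` and fractional part `s = σ - m ∈ (0,1)`: the singular-integral
representation of `(-Δ)^s` applied to `F = (-Δ)^m ⟨·⟩^{-q}` is bounded by `C ⟨x⟩^{-n-2s}`. -/
theorem fractional_laplacian_iterated_japanese_bracket_bound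
    (n : ℕ) (hn : 1 ≤ n) (q : ℝ) (hq : (n : ℝ) < q)
    (σ : ℝ) (hσ : 0 < σ) (m : ℕ) (hm : m = ⌊σ⌋₊)
    (s : ℝ) (hs : s = σ - (m : ℝ)) (hs01 : s ∈ Set.Ioo (0:ℝ) 1)
    (F : EuclideanSpace ℝ (Fin n) → ℝ)
    (hF : F = negLap^[m] (fun y : EuclideanSpace ℝ (Fin n) => (1 + ‖y‖ ^ 2) ^ (-q / 2))) :
    ∃ C > (0:ℝ), ∀ x : EuclideanSpace ℝ (Fin n),
      Integrable (fun y : EuclideanSpace ℝ (Fin n) =>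
        (2 * F x - F (x + y) - F (x - y)) * ‖y‖ ^ (-(n : ℝ) - 2 * s)) ∧
      |∫ y : EuclideanSpace ℝ (Fin n),
          (2 * F x - F (x + y) - F (x - y)) * ‖y‖ ^ (-(n : ℝ) - 2 * s)|
        ≤ C * (1 + ‖x‖ ^ 2) ^ (-((n : ℝ) + 2 * s) / 2) := by
  have : Nonempty (Fin n) := ⟨⟨0, hn⟩⟩
  rw [negLap_eq_neg_laplacian] at hF
  have hdim : (finrank ℝ (EuclideanSpace ℝ (Fin n)) : ℝ) = n := by simp
  have hbound := fractional_laplacian_iterated_japanese_bracket_bound_general (m := m) volume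
    (by rw [hdim]; linarith [m.cast_nonneg (α := ℝ)]) hs01 hF
  rwa [hdim] at hbound
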